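/- Let $U=\{1,\dots,n\}$ be a set of items, where item $a$ has utility $u_a\in\mathbb R$ and consideration probability $p_a\in(0,1]$, and let $1\le \ell\le k\le n$ with $\ell<n$. A length-$k$ ranking is a tuple $r=(r_1,\dots,r_k)$ of distinct items. For $C\subseteq U$ put $$\Pr\nolimits_{PL}(r\mid C)=\prod_{s=1}^{k}\frac{\exp(u_{r_s})}{\sum_{b\in C\setminus\{r_1,\dots,r_{s-1}\}}\exp(u_b)}\quad\text{if }\{r_1,\dots,r_k\}\subseteq C,$$ and $\Pr_{PL}(r\mid C)=0$ otherwise. Let $w(C)=\prod_{a\in C}p_a\prod_{b\in U\setminus C}(1-p_b)$, let $\Pr_C(C)=w(C)\big/\sum_{D\subseteq U,\,|D|\ge k}w(D)$ if $|C|\ge k$, and $\Pr_C(C)=0$ if $|C|<k$. The Plackett–Luce with consideration (PL+C) probability of $r$ is $\Pr_{PL+C}(r)=\sum_{C\subseteq U}\Pr_C(C)\Pr_{PL}(r\mid C)$, and $\Pr_{PL+C}(R)=\sum_{r\in R}\Pr_{PL+C}(r)$ for a set $R$ of rankings. Let $R_{i\le\ell}$ be the set of length-$k$ rankings with item $i$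 in one of the top $\ell$ positions. Let $i,j\in U$ be items with $u_i>u_j$. If $$c=\frac{\Pr_{PL+C}(R_{i\le\ell})}{\Pr_{PL+C}(R_{j\le\ell})}\le 1,$$ then $$p_i(1-p_j)\le c\,p_j(1-p_i),$$ that is, $\dfrac{p_i}{1-p_i}\le c\cdot\dfrac{p_j}{1-p_j}$, where $x/0=+\infty$ for $x>0$. -/

import Mathlib

noncomputable section

/-- Unnormalized weight of a consideration set `C`: each item `i ∈ C` is considered
(probability `p i`), each item `j ∉ C` is not (probability `1 - p j`). -/
def considerWeight (n : ℕ) (p : Fin n → ℝ) (C : Finset (Fin n)) : ℝ :=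
  (∏ i ∈ C, p i) * ∏ j ∈ Cᶜ, (1 - p j)

/-- Normalizing constant `z_{k,p}`: total weight of the consideration sets of size at least `k`. -/
def zConst (n k : ℕ) (p : Fin n → ℝ) : ℝ :=
  ∑ C ∈ Finset.univ.filter (fun C : Finset (Fin n) => k ≤ C.card), considerWeight n p C

/-- Probability of the consideration set `C`, conditioned on `k ≤ |C|`. -/
def prC (n k : ℕ) (p : Fin n → ℝ) (C : Finset (Fin n)) : ℝ :=
  if k ≤ C.card then considerWeight n p C / zConst n k p else 0

/-- Plackett–Luce probability of the length-`k` ranking `r` given the consideration set `C`.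
A ranking is an injective map from positions (counted from `0`) to items. -/
def prPL (n k : ℕ) (u : Fin n → ℝ) (r : Fin k ↪ Fin n) (C : Finset (Fin n)) : ℝ :=
  if ∀ t : Fin k, r t ∈ C then
    ∏ t : Fin k, Real.exp (u (r t)) /
      ∑ j ∈ C \ (Finset.Iio t).image r, Real.exp (u j)
  else 0

/-- Plackett–Luce-with-consideration (PL+C) probability of the ranking `r`. -/
def prPLC (n k : ℕ) (u p : Fin n → ℝ) (r : Fin k ↪ Fin n) : ℝ :=
  ∑ C : Finset (Fin n), prC n k p C * prPL n k u r C

/-- PL+C probability of a set of rankings. -/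
def prPLCset (n k : ℕ) (u p : Fin n → ℝ) (R : Finset (Fin k ↪ Fin n)) : ℝ :=
  ∑ r ∈ R, prPLC n k u p r

/-- `R_{i≤ℓ}`: the length-`k` rankings with item `i` in one of the top `ℓ` positions. -/
def topSet (n k : ℕ) (i : Fin n) (ℓ : ℕ) : Finset (Fin k ↪ Fin n) :=
  Finset.univ.filter (fun r => ∃ t : Fin k, (t : ℕ) < ℓ ∧ r t = i)

end

/-!
Let `σ` be the transposition of `i` and `j`. Under Plackett–Luce the first `ℓ` positions of a
length-`k` ranking are distributed as a length-`ℓ` ranking, so it is enough to know the total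
probability of the length-`ℓ` rankings `s` that avoid a given item. If `s` avoids `j ∈ C`, then
passing from `(s, C)` to `(σ s, σ C)` lowers every factor of the Plackett–Luce product: the picked
item can only lose utility (when it is `i`), whereas the available set, which still contains `j`,
can only gain total weight. Hence `i` is at least as likely to be in the top `ℓ` given `σ C` as `j`
is given `C`.

Suppose now that `c ≤ 1` and `c * (p j * (1 - p i)) ≤ p i * (1 - p j)`. Then `c * w C ≤ w (σ C)` for
every `C` containing `j`, so pairing the term of `C` with the term of `σ C` in the sums defining the
two PL+C probabilities gives `c * Pr (R_{j≤ℓ}) ≤ Pr (R_{i≤ℓ})`. The inequality is strict because of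
the full set `C = U`: it has positive weight, and there a ranking that puts `i` first and avoids `j`
in its `ℓ < n` positions has a strictly smaller factor after the transposition.
-/

section ChoiceProb

variable {α : Type*}

/-- The probability of choosing `a` from `D` in the multinomial logit model, which is the law of a
single Plackett–Luce pick. It is meant for `a ∈ D`, but membership is not built in. -/
noncomputable def choiceProb (u : α → ℝ) (D : Finset α) (a : α) : ℝ :=
  Real.exp (u a) / ∑ b ∈ D, Real.exp (u b)

theorem sum_exp_pos (u : α → ℝ) {D : Finset α} (hD : D.Nonempty) :
    0 < ∑ b ∈ D, Real.exp (u b) :=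
  Finset.sum_pos (fun _ _ => Real.exp_pos _) hD

theorem choiceProb_nonneg (u : α → ℝ) (D : Finset α) (a : α) : 0 ≤ choiceProb u D a :=
  div_nonneg (Real.exp_pos _).le (Finset.sum_nonneg fun _ _ => (Real.exp_pos _).le)

theorem choiceProb_pos (u : α → ℝ) {D : Finset α} (hD : D.Nonempty) (a : α) :
    0 < choiceProb u D a :=
  div_pos (Real.exp_pos _) (sum_exp_pos u hD)

theorem sum_choiceProb (u : α → ℝ) {D : Finset α} (hD : D.Nonempty) :
    ∑ a ∈ D, choiceProb u D a = 1 := by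
  simp only [choiceProb, ← Finset.sum_div, div_self (sum_exp_pos u hD).ne']

theorem choiceProb_map (u : α → ℝ) (σ : Equiv.Perm α) (D : Finset α) (a : α) :
    choiceProb u (D.map σ.toEmbedding) (σ a) = choiceProb (u ∘ σ) D a := by
  simp [choiceProb]

variable [DecidableEq α] {i j : α}

theorem map_swap_eq_self {D : Finset α} (hi : i ∈ D) (hj : j ∈ D) :
    D.map (Equiv.swap i j).toEmbedding = D := by
  refine Finset.map_perm fun b hb => ?_
  rcases (Equiv.swap_apply_ne_self_iff.mp hb).2 with rfl | rfl <;> assumption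

theorem sum_le_sum_comp_swap {f : α → ℝ} {D : Finset α} (hj : j ∈ D) (hf : f j ≤ f i) :
    ∑ b ∈ D, f b ≤ ∑ b ∈ D, f (Equiv.swap i j b) := by
  by_cases hi : i ∈ D
  · conv_lhs => rw [← map_swap_eq_self hi hj, Finset.sum_map]
    rfl
  · refine Finset.sum_le_sum fun b hb => ?_
    rcases eq_or_ne b j with rfl | hbj
    · simpa using hf
    · rw [Equiv.swap_apply_of_ne_of_ne (ne_of_mem_of_not_mem hb hi) hbj]

theorem apply_swap_le {f : α → ℝ} (hf : f j ≤ f i) {a : α} (ha : a ≠ j) :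
    f (Equiv.swap i j a) ≤ f a := by
  rcases eq_or_ne a i with rfl | hai
  · simpa using hf
  · rw [Equiv.swap_apply_of_ne_of_ne hai ha]

theorem choiceProb_comp_swap_le {u : α → ℝ} (hu : u j ≤ u i) {D : Finset α} (hj : j ∈ D) {a : α}
    (ha : a ≠ j) : choiceProb (u ∘ Equiv.swap i j) D a ≤ choiceProb u D a :=
  div_le_div₀ (Real.exp_pos _).le (Real.exp_le_exp.mpr (apply_swap_le hu ha))
    (sum_exp_pos u ⟨j, hj⟩)
    (sum_le_sum_comp_swap (f := fun b => Real.exp (u b)) hj (Real.exp_le_exp.mpr hu))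

theorem choiceProb_comp_swap_lt {u : α → ℝ} (hu : u j < u i) {D : Finset α} (hj : j ∈ D) :
    choiceProb (u ∘ Equiv.swap i j) D i < choiceProb u D i :=
  div_lt_div₀ (by simpa using hu)
    (sum_le_sum_comp_swap (f := fun b => Real.exp (u b)) hj (Real.exp_le_exp.mpr hu.le))
    (Real.exp_pos _).le (sum_exp_pos u ⟨j, hj⟩)

end ChoiceProb

theorem exists_embedding_apply_eq {ι α : Type*} [Fintype ι] [Fintype α]
    (h : Fintype.card ι ≤ Fintype.card α) (t : ι) (a : α) : ∃ e : ι ↪ α, e t = a := by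
  classical
  obtain ⟨e⟩ := Function.Embedding.nonempty_of_card_le h
  exact ⟨e.trans (Equiv.swap (e t) a).toEmbedding, by simp⟩

section PlackettLuce

variable {n k ℓ : ℕ} {u : Fin n → ℝ} {r : Fin k ↪ Fin n} {C : Finset (Fin n)} {i j : Fin n}

theorem prPL_of_forall_mem (h : ∀ t, r t ∈ C) :
    prPL n k u r C = ∏ t, choiceProb u (C \ (Finset.Iio t).image r) (r t) :=
  if_pos h

theorem prPL_of_notMem {t : Fin k} (h : r t ∉ C) : prPL n k u r C = 0 :=
  if_neg fun h' => h (h' t)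

theorem prPL_nonneg (u : Fin n → ℝ) (r : Fin k ↪ Fin n) (C : Finset (Fin n)) :
    0 ≤ prPL n k u r C := by
  unfold prPL
  split_ifs
  exacts [Finset.prod_nonneg fun t _ => choiceProb_nonneg u _ _, le_rfl]

theorem prPL_pos (u : Fin n → ℝ) (h : ∀ t, r t ∈ C) : 0 < prPL n k u r C := by
  rw [prPL_of_forall_mem h]
  exact Finset.prod_pos fun t _ => choiceProb_pos u ⟨r t, by simp [h]⟩ _

theorem prPL_map (u : Fin n → ℝ) (r : Fin k ↪ Fin n) (σ : Equiv.Perm (Fin n))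
    (C : Finset (Fin n)) :
    prPL n k u (r.trans σ.toEmbedding) (C.map σ.toEmbedding) = prPL n k (u ∘ σ) r C := by
  by_cases h : ∀ t, r t ∈ C
  · rw [prPL_of_forall_mem (by simpa using h), prPL_of_forall_mem h]
    refine Finset.prod_congr rfl fun t _ => ?_
    rw [← choiceProb_map, Finset.map_sdiff, Finset.map_eq_image _ ((Finset.Iio t).image r),
      Finset.image_image]
    rfl
  · obtain ⟨t, ht⟩ := not_forall.mp h
    rw [prPL_of_notMem ht, prPL_of_notMem (t := t) (by simpa using ht)]

theorem prPL_succ (u : Fin n → ℝ) {r : Fin (k + 1) ↪ Fin n} (hlast : r (Fin.last k) ∈ C) :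
    prPL n (k + 1) u r C = prPL n k u (Fin.Embedding.init r) C *
      choiceProb u (C \ Finset.univ.image (Fin.Embedding.init r)) (r (Fin.last k)) := by
  have hinit : r ∘ Fin.castSuccEmb = Fin.Embedding.init r := rfl
  by_cases h : ∀ t : Fin k, r t.castSucc ∈ C
  · rw [prPL_of_forall_mem (Fin.forall_fin_succ'.mpr ⟨h, hlast⟩),
      prPL_of_forall_mem (r := Fin.Embedding.init r) h, Fin.prod_univ_castSucc,
      Fin.Iio_last_eq_map]
    simp only [← Fin.map_castSuccEmb_Iio, Finset.map_eq_image, Finset.image_image, hinit]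
    rfl
  · obtain ⟨t, ht⟩ := not_forall.mp h
    rw [prPL_of_notMem ht, prPL_of_notMem (r := Fin.Embedding.init r) (t := t) ht, zero_mul]

theorem apply_last_notMem_image_init (r : Fin (k + 1) ↪ Fin n) :
    r (Fin.last k) ∉ Finset.univ.image (Fin.Embedding.init r) := by
  simp only [Finset.mem_image, Finset.mem_univ, true_and, not_exists]
  exact fun t ht => Fin.castSucc_ne_last t (r.injective ht)

theorem sum_prPL_init_eq (u : Fin n → ℝ) (hk : k < C.card) (s : Fin k ↪ Fin n) :
    ∑ r with Fin.Embedding.init r = s, prPL n (k + 1) u r C = prPL n k u s C := by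
  have hrest : (C \ Finset.univ.image s).Nonempty := by
    rw [Finset.sdiff_nonempty]
    refine fun hsub => hk.not_ge ?_
    simpa using (Finset.card_le_card hsub).trans Finset.card_image_le
  calc ∑ r with Fin.Embedding.init r = s, prPL n (k + 1) u r C
      = ∑ a ∈ C \ Finset.univ.image s,
          prPL n k u s C * choiceProb u (C \ Finset.univ.image s) a := ?_
    _ = prPL n k u s C := by rw [← Finset.mul_sum, sum_choiceProb u hrest, mul_one]
  have hlast {r : Fin (k + 1) ↪ Fin n} (hr : prPL n (k + 1) u r C ≠ 0) : r (Fin.last k) ∈ C :=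
    by_contra fun h => hr (prPL_of_notMem h)
  refine Finset.sum_bij_ne_zero (fun r _ _ => r (Fin.last k)) ?_ ?_ ?_ ?_
  · rintro r hr hr0
    obtain rfl := Finset.mem_filter_univ _ |>.mp hr
    exact Finset.mem_sdiff.mpr ⟨hlast hr0, apply_last_notMem_image_init r⟩
  · intro r hr _ r' hr' _ heq
    have hinit := ((Finset.mem_filter_univ _).mp hr).trans ((Finset.mem_filter_univ _).mp hr').symm
    exact DFunLike.ext _ _ (Fin.lastCases heq fun t => DFunLike.congr_fun hinit t)
  · intro a ha ha0
    obtain ⟨haC, has⟩ := Finset.mem_sdiff.mp ha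
    have hsnoc : Fin.Embedding.init (Fin.Embedding.snoc s (by simpa using has)) = s :=
      Fin.Embedding.init_snoc s _
    refine ⟨Fin.Embedding.snoc s (by simpa using has), by simpa using hsnoc, ?_,
      Fin.Embedding.snoc_last⟩
    rwa [prPL_succ u (by rwa [Fin.Embedding.snoc_last]), hsnoc, Fin.Embedding.snoc_last]
  · rintro r hr hr0
    obtain rfl := Finset.mem_filter_univ _ |>.mp hr
    exact prPL_succ u (hlast hr0)

theorem sum_prPL_prefix (u : Fin n → ℝ) (hℓ : ℓ ≤ k) (hk : k ≤ C.card)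
    (T : Finset (Fin ℓ ↪ Fin n)) :
    ∑ r with (Fin.castLEEmb hℓ).trans r ∈ T, prPL n k u r C = ∑ s ∈ T, prPL n ℓ u s C := by
  induction k, hℓ using Nat.le_induction with
  | base => exact Finset.sum_congr (Finset.ext fun _ => Finset.mem_filter_univ _) fun _ _ => rfl
  | succ k hℓ ih =>
    rw [← ih (by omega), Finset.sum_congr rfl fun s _ => (sum_prPL_init_eq u hk s).symm,
      Finset.sum_fiberwise_eq_sum_filter]
    refine Finset.sum_congr (Finset.ext fun r => ?_) fun _ _ => rfl
    simp only [Finset.mem_filter_univ]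
    rfl

theorem sum_prPL (u : Fin n → ℝ) (hk : k ≤ C.card) : ∑ r, prPL n k u r C = 1 := by
  have h := sum_prPL_prefix u k.zero_le hk Finset.univ
  rw [Finset.filter_true_of_mem fun _ _ => Finset.mem_univ _] at h
  rw [h, Fintype.sum_unique, prPL_of_forall_mem finZeroElim, Fin.prod_univ_zero]

/-- The Plackett–Luce probability, given the consideration set `C`, that item `i` is in one of the
top `ℓ` positions of a length-`k` ranking. -/
noncomputable def topProb (n k : ℕ) (u : Fin n → ℝ) (i : Fin n) (ℓ : ℕ) (C : Finset (Fin n)) : ℝ :=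
  ∑ r ∈ topSet n k i ℓ, prPL n k u r C

theorem mem_topSet : r ∈ topSet n k i ℓ ↔ ∃ t : Fin k, (t : ℕ) < ℓ ∧ r t = i := by
  simp [topSet]

theorem forall_ne_of_mem_compl_topSet (hr : r ∈ (topSet n k i k)ᶜ) (t : Fin k) : r t ≠ i :=
  fun h => Finset.mem_compl.mp hr (mem_topSet.mpr ⟨t, t.2, h⟩)

theorem topProb_eq_one_sub (u : Fin n → ℝ) (i : Fin n) (hℓ : ℓ ≤ k) (hk : k ≤ C.card) :
    topProb n k u i ℓ C = 1 - ∑ s ∈ (topSet n ℓ i ℓ)ᶜ, prPL n ℓ u s C := by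
  have hprefix : topSet n k i ℓ =
      Finset.univ.filter fun r => (Fin.castLEEmb hℓ).trans r ∈ topSet n ℓ i ℓ := by
    ext r
    simp only [mem_topSet, Finset.mem_filter_univ]
    exact ⟨fun ⟨t, ht, hr⟩ => ⟨⟨t, ht⟩, ht, hr⟩, fun ⟨t, ht, hr⟩ => ⟨t.castLE hℓ, ht, hr⟩⟩
  rw [topProb, hprefix, sum_prPL_prefix u hℓ hk, eq_sub_iff_add_eq, Finset.sum_add_sum_compl,
    sum_prPL u (hℓ.trans hk)]

theorem topProb_map (u : Fin n → ℝ) (σ : Equiv.Perm (Fin n)) (i : Fin n) (ℓ : ℕ)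
    (C : Finset (Fin n)) :
    topProb n k u (σ i) ℓ (C.map σ.toEmbedding) = topProb n k (u ∘ σ) i ℓ C := by
  symm
  refine Finset.sum_equiv (Equiv.embeddingCongr (Equiv.refl _) σ) (fun r => ?_) fun r _ => ?_
  · simp [mem_topSet]
  · exact (prPL_map u r σ C).symm

theorem topProb_nonneg (u : Fin n → ℝ) (i : Fin n) (ℓ : ℕ) (C : Finset (Fin n)) :
    0 ≤ topProb n k u i ℓ C :=
  Finset.sum_nonneg fun r _ => prPL_nonneg u r C

theorem topProb_of_notMem (u : Fin n → ℝ) (ℓ : ℕ) (hi : i ∉ C) : topProb n k u i ℓ C = 0 := by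
  refine Finset.sum_eq_zero fun r hr => ?_
  obtain ⟨t, -, rfl⟩ := mem_topSet.mp hr
  exact prPL_of_notMem hi

theorem exists_ranking_apply_eq (hk : k ≤ C.card) (t : Fin k) (hi : i ∈ C) :
    ∃ r : Fin k ↪ Fin n, r t = i ∧ ∀ s, r s ∈ C := by
  obtain ⟨e, he⟩ := exists_embedding_apply_eq (by simpa using hk) t (⟨i, hi⟩ : C)
  exact ⟨e.trans (.subtype _), congrArg Subtype.val he, fun s => (e s).2⟩

theorem topProb_pos (u : Fin n → ℝ) (hℓ : 1 ≤ ℓ) (hℓk : ℓ ≤ k) (hk : k ≤ C.card) (hi : i ∈ C) :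
    0 < topProb n k u i ℓ C := by
  obtain ⟨r, hr, hrC⟩ := exists_ranking_apply_eq hk ⟨0, by omega⟩ hi
  exact Finset.sum_pos' (fun r _ => prPL_nonneg u r C)
    ⟨r, mem_topSet.mpr ⟨_, Nat.zero_lt_of_lt hℓ, hr⟩, prPL_pos u hrC⟩

variable {v : Fin n → ℝ}

theorem mem_sdiff_image_of_forall_ne {a : Fin n} (ha : a ∈ C) (h : ∀ t, r t ≠ a)
    (s : Finset (Fin k)) : a ∈ C \ s.image r := by
  simp [ha, h]

theorem prPL_le_prPL (hle : ∀ D, j ∈ D → ∀ a ≠ j, choiceProb v D a ≤ choiceProb u D a)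
    (hj : j ∈ C) (hr : ∀ t, r t ≠ j) : prPL n k v r C ≤ prPL n k u r C := by
  by_cases hrC : ∀ t, r t ∈ C
  · rw [prPL_of_forall_mem hrC, prPL_of_forall_mem hrC]
    exact Finset.prod_le_prod (fun t _ => choiceProb_nonneg v _ _)
      fun t _ => hle _ (mem_sdiff_image_of_forall_ne hj hr _) _ (hr t)
  · obtain ⟨t, ht⟩ := not_forall.mp hrC
    rw [prPL_of_notMem ht, prPL_of_notMem ht]

theorem prPL_lt_prPL (hle : ∀ D, j ∈ D → ∀ a ≠ j, choiceProb v D a ≤ choiceProb u D a)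
    (hlt : ∀ D, j ∈ D → choiceProb v D i < choiceProb u D i) (hj : j ∈ C) (hr : ∀ t, r t ≠ j)
    (hrC : ∀ t, r t ∈ C) {t : Fin k} (ht : r t = i) : prPL n k v r C < prPL n k u r C := by
  rw [prPL_of_forall_mem hrC, prPL_of_forall_mem hrC]
  exact Finset.prod_lt_prod
    (fun t _ => choiceProb_pos v ⟨j, mem_sdiff_image_of_forall_ne hj hr _⟩ _)
    (fun t _ => hle _ (mem_sdiff_image_of_forall_ne hj hr _) _ (hr t))
    ⟨t, Finset.mem_univ t, ht ▸ hlt _ (mem_sdiff_image_of_forall_ne hj hr _)⟩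

theorem topProb_le_topProb (hle : ∀ D, j ∈ D → ∀ a ≠ j, choiceProb v D a ≤ choiceProb u D a)
    (hℓ : ℓ ≤ k) (hk : k ≤ C.card) (hj : j ∈ C) :
    topProb n k u j ℓ C ≤ topProb n k v j ℓ C := by
  rw [topProb_eq_one_sub u j hℓ hk, topProb_eq_one_sub v j hℓ hk]
  exact sub_le_sub_left (Finset.sum_le_sum fun r hr =>
    prPL_le_prPL hle hj (forall_ne_of_mem_compl_topSet hr)) 1

theorem topProb_lt_topProb (hle : ∀ D, j ∈ D → ∀ a ≠ j, choiceProb v D a ≤ choiceProb u D a)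
    (hlt : ∀ D, j ∈ D → choiceProb v D i < choiceProb u D i) (hℓ : 1 ≤ ℓ) (hℓk : ℓ ≤ k)
    (hk : k ≤ C.card) (hℓC : ℓ < C.card) (hi : i ∈ C) (hj : j ∈ C) (hij : i ≠ j) :
    topProb n k u j ℓ C < topProb n k v j ℓ C := by
  obtain ⟨r, hr, hrC⟩ := exists_ranking_apply_eq (C := C.erase j)
    (by rw [Finset.card_erase_of_mem hj]; omega) ⟨0, hℓ⟩ (Finset.mem_erase.mpr ⟨hij, hi⟩)
  have hrj : ∀ t, r t ≠ j := fun t => Finset.ne_of_mem_erase (hrC t)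
  rw [topProb_eq_one_sub u j hℓk hk, topProb_eq_one_sub v j hℓk hk]
  refine sub_lt_sub_left (Finset.sum_lt_sum (fun s hs => ?_) ⟨r, ?_, ?_⟩) 1
  · exact prPL_le_prPL hle hj (forall_ne_of_mem_compl_topSet hs)
  · simpa [mem_topSet] using hrj
  · exact prPL_lt_prPL hle hlt hj hrj (fun t => Finset.mem_of_mem_erase (hrC t)) hr

theorem topProb_le_topProb_map_swap (hu : u j ≤ u i) (hℓ : ℓ ≤ k) (hk : k ≤ C.card)
    (hj : j ∈ C) :
    topProb n k u j ℓ C ≤ topProb n k u i ℓ (C.map (Equiv.swap i j).toEmbedding) := by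
  have hmap := topProb_map (k := k) u (Equiv.swap i j) j ℓ C
  rw [Equiv.swap_apply_right] at hmap
  rw [hmap]
  exact topProb_le_topProb (fun D hD a => choiceProb_comp_swap_le hu hD) hℓ hk hj

theorem topProb_lt_topProb_of_mem (hu : u j < u i) (hℓ : 1 ≤ ℓ) (hℓk : ℓ ≤ k) (hk : k ≤ C.card)
    (hℓC : ℓ < C.card) (hi : i ∈ C) (hj : j ∈ C) : topProb n k u j ℓ C < topProb n k u i ℓ C := by
  have hmap := topProb_map (k := k) u (Equiv.swap i j) j ℓ C
  rw [Equiv.swap_apply_right, map_swap_eq_self hi hj] at hmap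
  rw [hmap]
  exact topProb_lt_topProb (fun D hD a => choiceProb_comp_swap_le hu.le hD)
    (fun D => choiceProb_comp_swap_lt hu) hℓ hℓk hk hℓC hi hj (ne_of_apply_ne u hu.ne')

end PlackettLuce

section Consideration

variable {n k ℓ : ℕ} {p : Fin n → ℝ} {C : Finset (Fin n)} {i j : Fin n}

theorem considerWeight_nonneg (hp : ∀ a, 0 < p a ∧ p a ≤ 1) (C : Finset (Fin n)) :
    0 ≤ considerWeight n p C :=
  mul_nonneg (Finset.prod_nonneg fun a _ => (hp a).1.le)
    (Finset.prod_nonneg fun a _ => sub_nonneg.mpr (hp a).2)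

theorem considerWeight_univ_pos (hp : ∀ a, 0 < p a) : 0 < considerWeight n p Finset.univ := by
  simpa [considerWeight] using Finset.prod_pos fun a _ => hp a

theorem zConst_pos (hp : ∀ a, 0 < p a ∧ p a ≤ 1) (hk : k ≤ n) : 0 < zConst n k p :=
  Finset.sum_pos' (fun C _ => considerWeight_nonneg hp C)
    ⟨Finset.univ, by simpa using hk, considerWeight_univ_pos fun a => (hp a).1⟩

theorem prC_nonneg (hp : ∀ a, 0 < p a ∧ p a ≤ 1) (k : ℕ) (C : Finset (Fin n)) :
    0 ≤ prC n k p C := by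
  unfold prC
  split_ifs
  exacts [div_nonneg (considerWeight_nonneg hp C)
    (Finset.sum_nonneg fun D _ => considerWeight_nonneg hp D), le_rfl]

theorem prC_univ_pos (hp : ∀ a, 0 < p a ∧ p a ≤ 1) (hk : k ≤ n) :
    0 < prC n k p Finset.univ := by
  rw [prC, if_pos (by simpa using hk)]
  exact div_pos (considerWeight_univ_pos fun a => (hp a).1) (zConst_pos hp hk)

theorem considerWeight_map (p : Fin n → ℝ) (σ : Equiv.Perm (Fin n)) (C : Finset (Fin n)) :
    considerWeight n p (C.map σ.toEmbedding) = considerWeight n (p ∘ σ) C := by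
  have hcompl : (C.map σ.toEmbedding)ᶜ = Cᶜ.map σ.toEmbedding := by
    ext a
    simp [Finset.mem_map_equiv]
  simp [considerWeight, hcompl]

theorem considerWeight_of_mem_of_notMem (p : Fin n → ℝ) (hj : j ∈ C) (hi : i ∉ C) :
    considerWeight n p C =
      p j * (1 - p i) * ((∏ a ∈ C.erase j, p a) * ∏ a ∈ Cᶜ.erase i, (1 - p a)) := by
  rw [considerWeight, ← Finset.mul_prod_erase C p hj,
    ← Finset.mul_prod_erase Cᶜ (fun a => 1 - p a) (Finset.mem_compl.mpr hi)]
  ring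

theorem mul_considerWeight_le_map_swap (hp : ∀ a, 0 < p a ∧ p a ≤ 1) {c : ℝ} (hc : c ≤ 1)
    (hodds : c * (p j * (1 - p i)) ≤ p i * (1 - p j)) (hj : j ∈ C) :
    c * considerWeight n p C ≤ considerWeight n p (C.map (Equiv.swap i j).toEmbedding) := by
  by_cases hi : i ∈ C
  · rw [map_swap_eq_self hi hj]
    exact mul_le_of_le_one_left (considerWeight_nonneg hp C) hc
  · have hfix {D : Finset (Fin n)} (hiD : i ∉ D) (hjD : j ∉ D) (f : Fin n → ℝ) :
        ∏ a ∈ D, f (Equiv.swap i j a) = ∏ a ∈ D, f a :=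
      Finset.prod_congr rfl fun a ha => by
        rw [Equiv.swap_apply_of_ne_of_ne (ne_of_mem_of_not_mem ha hiD)
          (ne_of_mem_of_not_mem ha hjD)]
    rw [considerWeight_map, considerWeight_of_mem_of_notMem p hj hi,
      considerWeight_of_mem_of_notMem _ hj hi]
    simp only [Function.comp_apply, Equiv.swap_apply_left, Equiv.swap_apply_right]
    rw [hfix (by simp [hi]) (by simp) p, hfix (by simp) (by simp [hj]) fun a => 1 - p a,
      ← mul_assoc]
    exact mul_le_mul_of_nonneg_right hodds <| mul_nonneg
      (Finset.prod_nonneg fun a _ => (hp a).1.le)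
      (Finset.prod_nonneg fun a _ => sub_nonneg.mpr (hp a).2)

theorem mul_prC_le_map_swap (hp : ∀ a, 0 < p a ∧ p a ≤ 1) {c : ℝ} (hc : c ≤ 1)
    (hodds : c * (p j * (1 - p i)) ≤ p i * (1 - p j)) (hj : j ∈ C) (k : ℕ) :
    c * prC n k p C ≤ prC n k p (C.map (Equiv.swap i j).toEmbedding) := by
  rw [prC, prC, Finset.card_map]
  split_ifs
  · rw [← mul_div_assoc]
    exact div_le_div_of_nonneg_right (mul_considerWeight_le_map_swap hp hc hodds hj)
      (Finset.sum_nonneg fun D _ => considerWeight_nonneg hp D)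
  · simp

variable {u : Fin n → ℝ}

theorem prPLCset_topSet (n k : ℕ) (u p : Fin n → ℝ) (i : Fin n) (ℓ : ℕ) :
    prPLCset n k u p (topSet n k i ℓ) = ∑ C, prC n k p C * topProb n k u i ℓ C := by
  simp only [prPLCset, prPLC, topProb, Finset.mul_sum]
  exact Finset.sum_comm

theorem prPLCset_topSet_pos (hp : ∀ a, 0 < p a ∧ p a ≤ 1) (hℓ : 1 ≤ ℓ) (hℓk : ℓ ≤ k)
    (hk : k ≤ n) (u : Fin n → ℝ) (i : Fin n) : 0 < prPLCset n k u p (topSet n k i ℓ) := by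
  rw [prPLCset_topSet]
  exact Finset.sum_pos' (fun C _ => mul_nonneg (prC_nonneg hp k C) (topProb_nonneg u i ℓ C))
    ⟨Finset.univ, Finset.mem_univ _, mul_pos (prC_univ_pos hp hk)
      (topProb_pos u hℓ hℓk (by simpa using hk) (Finset.mem_univ i))⟩

theorem mul_prC_mul_topProb_le_map_swap (hp : ∀ a, 0 < p a ∧ p a ≤ 1) (hu : u j ≤ u i)
    (hℓ : ℓ ≤ k) {c : ℝ} (hc : c ≤ 1) (hodds : c * (p j * (1 - p i)) ≤ p i * (1 - p j))
    (C : Finset (Fin n)) :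
    c * (prC n k p C * topProb n k u j ℓ C) ≤
      prC n k p (C.map (Equiv.swap i j).toEmbedding) *
        topProb n k u i ℓ (C.map (Equiv.swap i j).toEmbedding) := by
  by_cases hj : j ∈ C
  · by_cases hk : k ≤ C.card
    · rw [← mul_assoc]
      exact mul_le_mul (mul_prC_le_map_swap hp hc hodds hj k)
        (topProb_le_topProb_map_swap hu hℓ hk hj) (topProb_nonneg u j ℓ C) (prC_nonneg hp k _)
    · simp [prC, hk]
  · rw [topProb_of_notMem u ℓ hj, mul_zero, mul_zero]
    exact mul_nonneg (prC_nonneg hp k _) (topProb_nonneg u i ℓ _)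

theorem mul_prPLCset_topSet_lt (hp : ∀ a, 0 < p a ∧ p a ≤ 1) (hu : u j < u i) (hℓ : 1 ≤ ℓ)
    (hℓk : ℓ ≤ k) (hk : k ≤ n) (hℓn : ℓ < n) {c : ℝ} (hc : c ≤ 1)
    (hodds : c * (p j * (1 - p i)) ≤ p i * (1 - p j)) :
    c * prPLCset n k u p (topSet n k j ℓ) < prPLCset n k u p (topSet n k i ℓ) := by
  rw [prPLCset_topSet, prPLCset_topSet, Finset.mul_sum,
    ← Equiv.sum_comp (Equiv.swap i j).finsetCongr fun C => prC n k p C * topProb n k u i ℓ C]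
  refine Finset.sum_lt_sum
    (fun C _ => mul_prC_mul_topProb_le_map_swap hp hu.le hℓk hc hodds C)
    ⟨Finset.univ, Finset.mem_univ _, ?_⟩
  have htop : topProb n k u j ℓ Finset.univ < topProb n k u i ℓ Finset.univ :=
    topProb_lt_topProb_of_mem hu hℓ hℓk (by simpa using hk) (by simpa using hℓn)
      (Finset.mem_univ i) (Finset.mem_univ j)
  have hpos := prC_univ_pos hp hk
  calc c * (prC n k p Finset.univ * topProb n k u j ℓ Finset.univ)
      ≤ prC n k p Finset.univ * topProb n k u j ℓ Finset.univ :=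
        mul_le_of_le_one_left (mul_nonneg hpos.le (topProb_nonneg u j ℓ _)) hc
    _ < prC n k p Finset.univ * topProb n k u i ℓ Finset.univ :=
        mul_lt_mul_of_pos_left htop hpos
    _ = _ := by simp

end Consideration

theorem consider_gap_general (n k ℓ : ℕ) (u p : Fin n → ℝ) (i j : Fin n)
    (hp : ∀ a, 0 < p a ∧ p a ≤ 1) (hu : u i > u j)
    (hℓ : 1 ≤ ℓ) (hℓk : ℓ ≤ k) (hkn : k ≤ n) (hℓn : ℓ < n)
    (c : ℝ)
    (hc : c = prPLCset n k u p (topSet n k i ℓ) / prPLCset n k u p (topSet n k j ℓ))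
    (hc1 : c ≤ 1) :
    p i * (1 - p j) < c * (p j * (1 - p i)) := by
  by_contra! hodds
  have hlt := mul_prPLCset_topSet_lt hp hu hℓ hℓk hkn hℓn hc1 hodds
  rw [hc, div_mul_cancel₀ _ (prPLCset_topSet_pos hp hℓ hℓk hkn u j).ne'] at hlt
  exact hlt.false

theorem consider_gap (n k ℓ : ℕ) (u p : Fin n → ℝ) (i j : Fin n)
    (hp : ∀ a, 0 < p a ∧ p a ≤ 1) (hu : u i > u j)
    (hℓ : 1 ≤ ℓ) (hℓk : ℓ ≤ k) (hkn : k ≤ n) (hℓn : ℓ < n)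
    (c : ℝ)
    (hc : c = prPLCset n k u p (topSet n k i ℓ) / prPLCset n k u p (topSet n k j ℓ))
    (hc1 : c ≤ 1) :
    p i * (1 - p j) ≤ c * (p j * (1 - p i)) :=
  (consider_gap_general n k ℓ u p i j hp hu hℓ hℓk hkn hℓn c hc hc1).le
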